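/- Let N ≥ 1 and let α : Fin N × Fin N → ℝ be a constant matrix. On the polynomial algebra A = ℝ[x₁,…,x_N], define for each k ≥ 0 the bilinear map B_k(f,g) = ∑_{i,j : Fin k → Fin N} (∏_{r} α(i_r, j_r)) · (∂_{i₁}⋯∂_{i_k} f) · (∂_{j₁}⋯∂_{j_k} g), where ∂_s denotes partial derivative with respect to x_s. Then the Moyal-type product f ⋆ g = ∑_{k≥0} (ħ^k / k!) B_k(f,g) on A⟦ħ⟧ is associative: for every n ≥ 0 and all f,g,h ∈ A, ∑_{a+b=n} (1/(a! b!)) B_a(B_b(f,g), h) = ∑_{a+b=n} (1/(a! b!)) B_a(f, B_b(g,h)). -/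

import Mathlib

open Finset MvPolynomial

/-- Iterated partial derivative `∂_{i₁} ⋯ ∂_{i_k} f` of a polynomial in `N` variables
(partial derivatives commute, so the order is irrelevant). -/
noncomputable def iterDeriv {N kk : ℕ} (i : Fin kk → Fin N)
    (f : MvPolynomial (Fin N) ℝ) : MvPolynomial (Fin N) ℝ :=
  (List.ofFn i).foldl (fun p s => pderiv s p) f

/-- The `k`-th coefficient of the Moyal-type product associated to a constant matrix `α`:
`B_k(f,g) = ∑_{i,j : Fin k → Fin N} (∏_r α(i_r, j_r)) · (∂_{i₁}⋯∂_{i_k} f)·(∂_{j₁}⋯∂_{j_k} g)`,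
with `B₀(f,g) = f·g`. -/
noncomputable def moyalB {N : ℕ} (α : Fin N × Fin N → ℝ) (kk : ℕ)
    (f g : MvPolynomial (Fin N) ℝ) : MvPolynomial (Fin N) ℝ :=
  ∑ i : Fin kk → Fin N, ∑ j : Fin kk → Fin N,
    (∏ r : Fin kk, α (i r, j r)) • (iterDeriv i f * iterDeriv j g)

namespace MoyalAux

variable {N : ℕ}

abbrev A (N : ℕ) := MvPolynomial (Fin N) ℝ

lemma iterDeriv_cons {k : ℕ} (s : Fin N) (i : Fin k → Fin N) (f : A N) :
    iterDeriv (Fin.cons s i : Fin (k+1) → Fin N) f = iterDeriv i (pderiv s f) := by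
  simp [iterDeriv, List.ofFn_succ]

lemma sum_cons {M : Type*} [AddCommMonoid M] {k : ℕ} (F : (Fin (k+1) → Fin N) → M) :
    ∑ i, F i = ∑ s : Fin N, ∑ i : Fin k → Fin N, F (Fin.cons s i) := by
  rw [← (Fin.consEquiv (fun _ : Fin (k+1) => Fin N)).sum_comp, Fintype.sum_prod_type]
  rfl

lemma moyalB_zero (α : Fin N × Fin N → ℝ) (f g : A N) : moyalB α 0 f g = f * g := by
  simp [moyalB, iterDeriv]

lemma moyalB_succ (α : Fin N × Fin N → ℝ) (k : ℕ) (f g : A N) :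
    moyalB α (k+1) f g = ∑ s, ∑ t, α (s, t) • moyalB α k (pderiv s f) (pderiv t g) := by
  unfold moyalB
  rw [sum_cons]
  refine Finset.sum_congr rfl fun s _ => ?_
  simp_rw [sum_cons (N := N) (k := k), iterDeriv_cons, Fin.prod_univ_succ, Fin.cons_zero,
    Fin.cons_succ, Finset.smul_sum, smul_smul]
  rw [Finset.sum_comm]

lemma moyalB_add_left (α : Fin N × Fin N → ℝ) (k : ℕ) (f f' g : A N) :
    moyalB α k (f + f') g = moyalB α k f g + moyalB α k f' g := by
  induction k generalizing f f' g with
  | zero => simp [moyalB_zero, add_mul]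
  | succ k ih => simp [moyalB_succ, ih, Finset.sum_add_distrib]

lemma moyalB_add_right (α : Fin N × Fin N → ℝ) (k : ℕ) (f g g' : A N) :
    moyalB α k f (g + g') = moyalB α k f g + moyalB α k f g' := by
  induction k generalizing f g g' with
  | zero => simp [moyalB_zero, mul_add]
  | succ k ih => simp [moyalB_succ, ih, Finset.sum_add_distrib]

lemma moyalB_smul_left (α : Fin N × Fin N → ℝ) (k : ℕ) (c : ℝ) (f g : A N) :
    moyalB α k (c • f) g = c • moyalB α k f g := by
  induction k generalizing f g with
  | zero => simp [moyalB_zero]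
  | succ k ih => simp [moyalB_succ, ih, Finset.smul_sum, smul_comm c]

lemma moyalB_smul_right (α : Fin N × Fin N → ℝ) (k : ℕ) (c : ℝ) (f g : A N) :
    moyalB α k f (c • g) = c • moyalB α k f g := by
  induction k generalizing f g with
  | zero => simp [moyalB_zero]
  | succ k ih => simp [moyalB_succ, ih, Finset.smul_sum, smul_comm c]

/-- `moyalB` as a bilinear map. -/
noncomputable def BL (α : Fin N × Fin N → ℝ) (k : ℕ) : A N →ₗ[ℝ] A N →ₗ[ℝ] A N :=
  LinearMap.mk₂ ℝ (moyalB α k) (moyalB_add_left α k) (moyalB_smul_left α k)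
    (moyalB_add_right α k) (moyalB_smul_right α k)

lemma moyalB_sum_left (α : Fin N × Fin N → ℝ) (k : ℕ) (F : Fin N → Fin N → A N)
    (c : Fin N × Fin N → ℝ) (g : A N) :
    moyalB α k (∑ s, ∑ t, c (s, t) • F s t) g = ∑ s, ∑ t, c (s, t) • moyalB α k (F s t) g := by
  change BL α k _ g = ∑ s, ∑ t, c (s, t) • BL α k (F s t) g
  simp

lemma moyalB_sum_right (α : Fin N × Fin N → ℝ) (k : ℕ) (F : Fin N → Fin N → A N)
    (c : Fin N × Fin N → ℝ) (f : A N) :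
    moyalB α k f (∑ s, ∑ t, c (s, t) • F s t) = ∑ s, ∑ t, c (s, t) • moyalB α k f (F s t) := by
  change BL α k f _ = ∑ s, ∑ t, c (s, t) • BL α k f (F s t)
  simp

/-- Ternary operations on polynomials. -/
abbrev T (N : ℕ) := A N → A N → A N → A N

/-- `α^{st} ∂_s` on the first slot, `∂_t` on the second. -/
noncomputable def P12 (α : Fin N × Fin N → ℝ) : Module.End ℝ (T N) where
  toFun Φ := fun f g h => ∑ s, ∑ t, α (s, t) • Φ (pderiv s f) (pderiv t g) h
  map_add' Φ Ψ := by funext f g h; simp [Finset.sum_add_distrib]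
  map_smul' c Φ := by funext f g h; simp [Finset.smul_sum, smul_comm c]

/-- `α^{st} ∂_s` on the first slot, `∂_t` on the third. -/
noncomputable def P13 (α : Fin N × Fin N → ℝ) : Module.End ℝ (T N) where
  toFun Φ := fun f g h => ∑ s, ∑ t, α (s, t) • Φ (pderiv s f) g (pderiv t h)
  map_add' Φ Ψ := by funext f g h; simp [Finset.sum_add_distrib]
  map_smul' c Φ := by funext f g h; simp [Finset.smul_sum, smul_comm c]

/-- `α^{st} ∂_s` on the second slot, `∂_t` on the third. -/
noncomputable def P23 (α : Fin N × Fin N → ℝ) : Module.End ℝ (T N) where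
  toFun Φ := fun f g h => ∑ s, ∑ t, α (s, t) • Φ f (pderiv s g) (pderiv t h)
  map_add' Φ Ψ := by funext f g h; simp [Finset.sum_add_distrib]
  map_smul' c Φ := by funext f g h; simp [Finset.smul_sum, smul_comm c]

lemma pd_comm (s t : Fin N) (f : A N) :
    pderiv (R := ℝ) s (pderiv t f) = pderiv t (pderiv s f) := by
  have h : ⁅(pderiv s : Derivation ℝ (A N) (A N)), (pderiv t : Derivation ℝ (A N) (A N))⁆ = 0 := by
    apply MvPolynomial.derivation_ext
    intro i
    simp [Derivation.commutator_apply, pderiv_X, Pi.single_apply, apply_ite]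
  have h2 := congrArg (fun D => D f) h
  simpa [Derivation.commutator_apply, sub_eq_zero] using h2

lemma sum4 {M : Type*} [AddCommMonoid M] (F : Fin N → Fin N → Fin N → Fin N → M) :
    ∑ a, ∑ b, ∑ c, ∑ d, F a b c d = ∑ c, ∑ d, ∑ a, ∑ b, F a b c d := by
  have h := Finset.sum_comm (s := (univ : Finset (Fin N × Fin N)))
    (t := (univ : Finset (Fin N × Fin N))) (f := fun x y => F x.1 x.2 y.1 y.2)
  simpa only [Fintype.sum_prod_type] using h

lemma comm_12_13 (α : Fin N × Fin N → ℝ) : Commute (P12 α) (P13 α) := by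
  ext1 Φ; funext f g h
  simp only [Module.End.mul_apply, P12, P13, LinearMap.coe_mk, AddHom.coe_mk, Finset.smul_sum]
  rw [sum4]
  refine sum_congr rfl fun a _ => sum_congr rfl fun b _ => sum_congr rfl fun c _ =>
    sum_congr rfl fun d _ => ?_
  rw [smul_comm, pd_comm c a]

lemma comm_12_23 (α : Fin N × Fin N → ℝ) : Commute (P12 α) (P23 α) := by
  ext1 Φ; funext f g h
  simp only [Module.End.mul_apply, P12, P23, LinearMap.coe_mk, AddHom.coe_mk, Finset.smul_sum]
  rw [sum4]
  refine sum_congr rfl fun a _ => sum_congr rfl fun b _ => sum_congr rfl fun c _ =>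
    sum_congr rfl fun d _ => ?_
  rw [smul_comm, pd_comm d a]

lemma comm_13_23 (α : Fin N × Fin N → ℝ) : Commute (P13 α) (P23 α) := by
  ext1 Φ; funext f g h
  simp only [Module.End.mul_apply, P13, P23, LinearMap.coe_mk, AddHom.coe_mk, Finset.smul_sum]
  rw [sum4]
  refine sum_congr rfl fun a _ => sum_congr rfl fun b _ => sum_congr rfl fun c _ =>
    sum_congr rfl fun d _ => ?_
  rw [smul_comm, pd_comm d b]

/-- The triple product. -/
noncomputable def Φ₀ (N : ℕ) : T N := fun f g h => f * g * h

lemma left_aux (α : Fin N × Fin N → ℝ) (a : ℕ) :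
    ((P13 α + P23 α) ^ a) (Φ₀ N) = fun f g h => moyalB α a (f * g) h := by
  induction a with
  | zero => funext f g h; simp [moyalB_zero, Φ₀]
  | succ a ih =>
    rw [pow_succ', Module.End.mul_apply, ih]
    funext f g h
    simp only [LinearMap.add_apply, Pi.add_apply, P13, P23, LinearMap.coe_mk, AddHom.coe_mk,
      moyalB_succ, Derivation.leibniz, moyalB_add_left, smul_add, Finset.sum_add_distrib,
      smul_eq_mul]
    rw [add_comm]
    simp only [mul_comm]

lemma right_aux (α : Fin N × Fin N → ℝ) (a : ℕ) :
    ((P12 α + P13 α) ^ a) (Φ₀ N) = fun f g h => moyalB α a f (g * h) := by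
  induction a with
  | zero => funext f g h; simp [moyalB_zero, Φ₀, mul_assoc]
  | succ a ih =>
    rw [pow_succ', Module.End.mul_apply, ih]
    funext f g h
    simp only [LinearMap.add_apply, Pi.add_apply, P12, P13, LinearMap.coe_mk, AddHom.coe_mk,
      moyalB_succ, Derivation.leibniz, moyalB_add_right, smul_add, Finset.sum_add_distrib,
      smul_eq_mul]
    rw [add_comm]
    simp only [mul_comm]

lemma left_eq (α : Fin N × Fin N → ℝ) (a b : ℕ) :
    ((P12 α) ^ b * (P13 α + P23 α) ^ a) (Φ₀ N) =
      fun f g h => moyalB α a (moyalB α b f g) h := by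
  rw [Module.End.mul_apply, left_aux]
  induction b with
  | zero => funext f g h; simp [moyalB_zero]
  | succ b ih =>
    rw [pow_succ', Module.End.mul_apply, ih]
    funext f g h
    simp only [P12, LinearMap.coe_mk, AddHom.coe_mk, moyalB_succ α b, moyalB_sum_left]

lemma right_eq (α : Fin N × Fin N → ℝ) (a b : ℕ) :
    ((P23 α) ^ b * (P12 α + P13 α) ^ a) (Φ₀ N) =
      fun f g h => moyalB α a f (moyalB α b g h) := by
  rw [Module.End.mul_apply, right_aux]
  induction b with
  | zero => funext f g h; simp [moyalB_zero]
  | succ b ih =>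
    rw [pow_succ', Module.End.mul_apply, ih]
    funext f g h
    simp only [P23, LinearMap.coe_mk, AddHom.coe_mk, moyalB_succ α b, moyalB_sum_right]

lemma binom {X Y : Module.End ℝ (T N)} (h : Commute X Y) (n : ℕ) :
    ∑ p ∈ antidiagonal n, (1 / ((p.1.factorial : ℝ) * (p.2.factorial : ℝ))) • (X ^ p.2 * Y ^ p.1)
      = (1 / (n.factorial : ℝ)) • (X + Y) ^ n := by
  rw [add_comm X Y, h.symm.add_pow', Finset.smul_sum]
  refine sum_congr rfl fun p hp => ?_
  have hp' := mem_antidiagonal.mp hp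
  subst hp'
  rw [← Nat.cast_smul_eq_nsmul ℝ, smul_smul, (h.pow_pow _ _).eq]
  congr 1
  have := Nat.add_choose_mul_factorial_mul_factorial p.1 p.2
  have h3 : (((p.1 + p.2).choose p.1 : ℕ) : ℝ) * p.1.factorial * p.2.factorial
    = (p.1 + p.2).factorial := by
    rw [Nat.choose_symm_add]; exact_mod_cast this
  have := Nat.factorial_ne_zero (p.1 + p.2)
  have := Nat.factorial_ne_zero p.1
  have := Nat.factorial_ne_zero p.2
  field_simp
  linarith

end MoyalAux

open MoyalAux

/-- The Moyal-type product `f ⋆ g = ∑_{k≥0} (ħ^k/k!) B_k(f,g)` on `ℝ[x₁,…,x_N]⟦ħ⟧` associated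
to a constant matrix `α` is associative, order by order in `ħ`: for every `n ≥ 0`,
`∑_{a+b=n} (1/(a!b!)) B_a(B_b(f,g),h) = ∑_{a+b=n} (1/(a!b!)) B_a(f,B_b(g,h))`. -/
theorem moyal_product_associative {N : ℕ} (hN : 1 ≤ N) (α : Fin N × Fin N → ℝ) :
    ∀ n : ℕ, ∀ f g h : MvPolynomial (Fin N) ℝ,
      ∑ p ∈ antidiagonal n,
          (1 / ((p.1.factorial : ℝ) * (p.2.factorial : ℝ))) •
            moyalB α p.1 (moyalB α p.2 f g) h
        = ∑ p ∈ antidiagonal n,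
            (1 / ((p.1.factorial : ℝ) * (p.2.factorial : ℝ))) •
              moyalB α p.1 f (moyalB α p.2 g h) := by
  intro n f g h
  have hL := binom ((comm_12_13 α).add_right (comm_12_23 α)) n
  have hR := binom ((comm_12_23 α).symm.add_right (comm_13_23 α).symm) n
  have e : P12 α + (P13 α + P23 α) = P23 α + (P12 α + P13 α) := by abel
  rw [e, ← hR] at hL
  have key := congrArg (fun L : Module.End ℝ (T N) => L (Φ₀ N) f g h) hL
  simpa only [LinearMap.sum_apply, LinearMap.smul_apply, left_eq, right_eq, Finset.sum_apply,
    Pi.smul_apply] using key
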